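/- Let n ∈ (0, 2), μ = 3/n, T > 0, and let φ : ℝ → ℝ be a nonconstant T-periodic function of class C² with φ'' locally absolutely continuous, having only finitely many zeros in [0, T), and satisfying φ''' + 3(μ−1)φ'' + (3μ²−6μ+2)φ' + μ(μ−1)(μ−2)φ + |φ|^{−n}φ = 0 at every point where φ ≠ 0. Then ∫₀ᵀ (φ''(s))² ds = (3μ² − 6μ + 2) ∫₀ᵀ (φ'(s))² ds; in particular 3μ² − 6μ + 2 > 0, which is equivalent to n < 9/(3+√3). -/

import Mathlib

open MeasureTheory intervalIntegral

/-- Off the zero set the second derivative is differentiable. -/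
lemma aux_hasDeriv (f g : ℝ → ℝ) (U : Set ℝ) (hU : IsOpen U)
    (hAC : ∀ a b : ℝ, f b - f a = ∫ s in a..b, deriv f s)
    (hg : ContinuousOn g U) (hfg : ∀ s ∈ U, deriv f s = g s) (x : ℝ) (hx : x ∈ U) :
    HasDerivAt f (g x) x := by
  obtain ⟨ε, hε, hb⟩ := Metric.isOpen_iff.1 hU x hx
  have hder : ContinuousOn (deriv f) U := hg.congr hfg
  have h1 : HasDerivAt (fun u => ∫ s in x..u, deriv f s) (deriv f x) x := by
    apply intervalIntegral.integral_hasDerivAt_right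
    · simp
    · exact hder.stronglyMeasurableAtFilter hU x hx
    · exact hder.continuousAt (hU.mem_nhds hx)
  have h2 : f = fun u => f x + ∫ s in x..u, deriv f s := by
    funext u
    rw [← hAC x u]; ring
  rw [← hfg x hx]
  have h3 := h1.const_add (f x)
  rwa [← h2] at h3

lemma aux_pow (n : ℝ) (hn2 : n < 2) (f : ℝ → ℝ) (f' x : ℝ) (hf : HasDerivAt f f' x)
    (hx : f x ≠ 0) :
    HasDerivAt (fun s => ((f s) ^ 2) ^ ((2 - n) / 2) / (2 - n)) (|f x| ^ (-n) * f x * f') x := by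
  have h := ((hf.pow 2).rpow_const (p := (2 - n) / 2) (Or.inl (pow_ne_zero 2 hx))).div_const (2 - n)
  refine h.congr_deriv ?_
  have e : (f x ^ 2) ^ ((2 - n) / 2 - 1) = |f x| ^ (-n) := by
    rw [← sq_abs, ← Real.rpow_natCast, ← Real.rpow_mul (abs_nonneg _)]
    congr 1
    push_cast; ring
  have h2 : (2 - n) ≠ 0 := by linarith
  have e' : ((f ^ 2) x) ^ ((2 - n) / 2 - 1) = |f x| ^ (-n) := e
  rw [e']
  push_cast
  field_simp

/-- Multiplying the oscillatory-component equation by `φ'` and integrating over a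
period: for `n ∈ (0,2)`, `μ = 3/n`, any nonconstant `T`-periodic solution `φ` (of
class `C²` with `φ''` locally absolutely continuous and finitely many zeros per
period) satisfies `∫₀ᵀ (φ'')² = (3μ²-6μ+2)∫₀ᵀ(φ')²`; in particular
`3μ²-6μ+2 > 0`, equivalently `n < 9/(3+√3)`. -/
theorem periodic_orbit_energy_identity
    (n μ T : ℝ) (hn : n ∈ Set.Ioo (0 : ℝ) 2) (hμ : μ = 3 / n) (hT : 0 < T)
    (φ : ℝ → ℝ) (hreg : ContDiff ℝ 2 φ)
    (hAC : ∀ a b : ℝ, deriv (deriv φ) b - deriv (deriv φ) a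
      = ∫ s in a..b, deriv (deriv (deriv φ)) s)
    (hper : Function.Periodic φ T)
    (hnc : ∃ s t : ℝ, φ s ≠ φ t)
    (hfin : Set.Finite {s ∈ Set.Ico 0 T | φ s = 0})
    (hode : ∀ s : ℝ, φ s ≠ 0 →
      deriv (deriv (deriv φ)) s + 3 * (μ - 1) * deriv (deriv φ) s
        + (3 * μ ^ 2 - 6 * μ + 2) * deriv φ s
        + μ * (μ - 1) * (μ - 2) * φ s + |φ s| ^ (-n) * φ s = 0) :
    (∫ s in (0:ℝ)..T, (deriv (deriv φ) s) ^ 2)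
        = (3 * μ ^ 2 - 6 * μ + 2) * ∫ s in (0:ℝ)..T, (deriv φ s) ^ 2 ∧
      0 < 3 * μ ^ 2 - 6 * μ + 2 ∧ n < 9 / (3 + Real.sqrt 3) := by
  obtain ⟨hn0, hn2⟩ := hn
  have hd0 : Differentiable ℝ φ := hreg.differentiable (by norm_num)
  have hreg1 : ContDiff ℝ 1 (deriv φ) := by
    have h : ContDiff ℝ (1 + 1) φ := by
      have e : (1 + 1 : WithTop ℕ∞) = 2 := by norm_num
      rw [e]; exact hreg
    exact (contDiff_succ_iff_deriv.1 h).2.2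
  have hd1 : Differentiable ℝ (deriv φ) := hreg1.differentiable (by norm_num)
  have hc0 : Continuous φ := hd0.continuous
  have hc1 : Continuous (deriv φ) := hd1.continuous
  have hc2 : Continuous (deriv (deriv φ)) := hreg1.continuous_deriv (by norm_num)
  have hperd : ∀ f : ℝ → ℝ, Function.Periodic f T → Function.Periodic (deriv f) T := by
    intro f hf x
    rw [← deriv_comp_add_const]
    congr 1
    funext y; exact hf y
  have hp1 := hperd φ hper
  have hp2 := hperd _ hp1
  have hD : ∀ x, φ x ≠ 0 → HasDerivAt (deriv (deriv φ))
      (-(3 * (μ - 1) * deriv (deriv φ) x + (3 * μ ^ 2 - 6 * μ + 2) * deriv φ x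
        + μ * (μ - 1) * (μ - 2) * φ x + |φ x| ^ (-n) * φ x)) x := by
    intro x hx
    refine aux_hasDeriv (deriv (deriv φ)) (fun x =>
      (-(3 * (μ - 1) * deriv (deriv φ) x + (3 * μ ^ 2 - 6 * μ + 2) * deriv φ x
        + μ * (μ - 1) * (μ - 2) * φ x + |φ x| ^ (-n) * φ x))) {s | φ s ≠ 0}
      (isOpen_ne_fun hc0 continuous_const) hAC ?_ ?_ x hx
    · have h1 : ContinuousOn (fun x => |φ x| ^ (-n)) {s | φ s ≠ 0} :=
        hc0.abs.continuousOn.rpow_const (fun s hs => Or.inl (abs_ne_zero.2 hs))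
      have h2 : ContinuousOn (fun x => |φ x| ^ (-n) * φ x) {s | φ s ≠ 0} :=
        h1.mul hc0.continuousOn
      refine ContinuousOn.neg (ContinuousOn.add (Continuous.continuousOn ?_) h2)
      fun_prop
    · intro s hs
      have := hode s hs
      linarith
  have hInt : (∫ s in (0:ℝ)..T, ((deriv (deriv φ) s) ^ 2
      - (3 * μ ^ 2 - 6 * μ + 2) * (deriv φ s) ^ 2)) = 0 := by
    have hG := MeasureTheory.integral_eq_of_hasDerivAt_off_countable_of_le
      (fun s => deriv (deriv φ) s * deriv φ s + 3 * (μ - 1) / 2 * (deriv φ s) ^ 2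
        + μ * (μ - 1) * (μ - 2) / 2 * (φ s) ^ 2 + ((φ s) ^ 2) ^ ((2 - n) / 2) / (2 - n))
      (fun s => (deriv (deriv φ) s) ^ 2 - (3 * μ ^ 2 - 6 * μ + 2) * (deriv φ s) ^ 2)
      hT.le hfin.countable ?_ ?_ ?_
    · rw [hG]
      have e0 := hper 0
      have e1 := hp1 0
      have e2 := hp2 0
      rw [zero_add] at e0 e1 e2
      simp only [e0, e1, e2, sub_self]
    · have hr : Continuous (fun s => ((φ s) ^ 2) ^ ((2 - n) / 2)) :=
        (hc0.pow 2).rpow_const (fun s => Or.inr (by linarith))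
      apply Continuous.continuousOn
      fun_prop
    · intro x hx
      have hx0 : φ x ≠ 0 := fun h => hx.2 ⟨⟨hx.1.1.le, hx.1.2⟩, h⟩
      have h0 := (hd0 x).hasDerivAt
      have h1 := (hd1 x).hasDerivAt
      have h := ((((hD x hx0).mul h1).add ((h1.pow 2).const_mul (3 * (μ - 1) / 2))).add
        ((h0.pow 2).const_mul (μ * (μ - 1) * (μ - 2) / 2))).add (aux_pow n hn2 φ _ x h0 hx0)
      refine h.congr_deriv ?_
      push_cast
      ring
    · apply Continuous.intervalIntegrable
      fun_prop
  have hid : (∫ s in (0:ℝ)..T, (deriv (deriv φ) s) ^ 2)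
        = (3 * μ ^ 2 - 6 * μ + 2) * ∫ s in (0:ℝ)..T, (deriv φ s) ^ 2 := by
    have i1 : IntervalIntegrable (fun s => (deriv (deriv φ) s) ^ 2) volume 0 T :=
      (hc2.pow 2).intervalIntegrable _ _
    have i2 : IntervalIntegrable (fun s => (3 * μ ^ 2 - 6 * μ + 2) * (deriv φ s) ^ 2) volume 0 T :=
      (continuous_const.mul (hc1.pow 2)).intervalIntegrable _ _
    rw [intervalIntegral.integral_sub i1 i2,
      intervalIntegral.integral_const_mul] at hInt
    linarith
  have hpos : 0 < 3 * μ ^ 2 - 6 * μ + 2 := by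
    by_contra hneg
    push Not at hneg
    have hA : 0 ≤ ∫ s in (0:ℝ)..T, (deriv φ s) ^ 2 :=
      intervalIntegral.integral_nonneg hT.le (fun s _ => sq_nonneg _)
    have hB : (∫ s in (0:ℝ)..T, (deriv (deriv φ) s) ^ 2) ≤ 0 := by
      rw [hid]; exact mul_nonpos_of_nonpos_of_nonneg hneg hA
    have hz : ∀ s ∈ Set.Icc 0 T, deriv (deriv φ) s = 0 := by
      intro s hs
      by_contra hne
      have := intervalIntegral.integral_pos hT (f := fun s => (deriv (deriv φ) s) ^ 2)
        (hc2.pow 2).continuousOn (fun s _ => sq_nonneg _) ⟨s, hs, by positivity⟩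
      linarith
    have hz2 : ∀ s, deriv (deriv φ) s = 0 := by
      intro s
      obtain ⟨y, hy, e⟩ := hp2.exists_mem_Ico₀ hT s
      rw [e]; exact hz y ⟨hy.1, hy.2.le⟩
    have hA0 : ∀ s, deriv φ s = deriv φ 0 := fun s => is_const_of_deriv_eq_zero hd1 hz2 s 0
    have hlin : ∀ s, φ s - deriv φ 0 * s = φ 0 := by
      intro s
      have := is_const_of_deriv_eq_zero (f := fun s => φ s - deriv φ 0 * s) (by fun_prop)
        (fun x => by
          have h := ((hd0 x).hasDerivAt.sub ((hasDerivAt_id x).const_mul (deriv φ 0))).deriv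
          have h' : deriv (fun s => φ s - deriv φ 0 * s) x = deriv φ x - deriv φ 0 * 1 := h
          rw [h', hA0 x]; ring) s 0
      simpa using this
    have h3 : deriv φ 0 = 0 := by
      have e := hper 0
      rw [zero_add] at e
      have := hlin T
      rw [e] at this
      have h4 : deriv φ 0 * T = 0 := by linarith
      exact (mul_eq_zero.1 h4).resolve_right hT.ne'
    obtain ⟨s, t, hst⟩ := hnc
    apply hst
    have h5 := hlin s
    have h6 := hlin t
    rw [h3] at h5 h6
    linarith
  refine ⟨hid, hpos, ?_⟩
  have hs3 : Real.sqrt 3 ^ 2 = 3 := Real.sq_sqrt (by norm_num)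
  have hs0 : 0 ≤ Real.sqrt 3 := Real.sqrt_nonneg 3
  have hq : 0 < 27 - 18 * n + 2 * n ^ 2 := by
    have e : 27 - 18 * n + 2 * n ^ 2 = (3 * μ ^ 2 - 6 * μ + 2) * n ^ 2 := by
      rw [hμ]; field_simp; ring
    rw [e]; positivity
  rw [lt_div_iff₀ (by positivity)]
  by_contra hcon
  push Not at hcon
  have hge : (9 - 3 * Real.sqrt 3) / 2 ≤ n := by nlinarith
  nlinarith [mul_nonneg (sub_nonneg.2 hge)
    (show 0 ≤ (9 + 3 * Real.sqrt 3) / 2 - n by linarith)]
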